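/- Let b be a connected, canonically compactifiable graph over a finite discrete measure space (X,m), let c > 0, and let h ∈ ℓ²(X,m) with h not identically zero. Then there exists u ∈ D(L) with Lu = h e^u − c (i.e. Lu(x) = h(x)e^{u(x)} − c for all x ∈ X) if and only if h is positive somewhere, i.e. h(x₀) > 0 for some x₀ ∈ X. -/

import Mathlib

open scoped BigOperators

/-- `u` is square-summable with respect to the measure `m`, i.e. `u ∈ ℓ²(X,m)`. -/
def MemL2 {X : Type*} (m : X → ℝ) (u : X → ℝ) : Prop :=
  Summable (fun x => u x ^ 2 * m x)

/-- `u` has finite energy: the sum defining `Q̃(u)` converges. -/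
def FinEnergy {X : Type*} (b : X → X → ℝ) (u : X → ℝ) : Prop :=
  Summable (fun p : X × X => b p.1 p.2 * (u p.1 - u p.2) ^ 2)

/-- The energy `Q(u) = (1/2) Σ_{x,y} b(x,y) (u(x) - u(y))²`. -/
noncomputable def energy {X : Type*} (b : X → X → ℝ) (u : X → ℝ) : ℝ :=
  (1 / 2) * ∑' p : X × X, b p.1 p.2 * (u p.1 - u p.2) ^ 2

/-- The bilinear energy form `Q(u,v) = (1/2) Σ_{x,y} b(x,y)(u(x)-u(y))(v(x)-v(y))`. -/
noncomputable def energyBil {X : Type*} (b : X → X → ℝ) (u v : X → ℝ) : ℝ :=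
  (1 / 2) * ∑' p : X × X, b p.1 p.2 * (u p.1 - u p.2) * (v p.1 - v p.2)

/-- The form domain `D(Q) = ℓ²(X,m) ∩ D̃`. -/
def MemDQ {X : Type*} (b : X → X → ℝ) (m : X → ℝ) (u : X → ℝ) : Prop :=
  MemL2 m u ∧ FinEnergy b u

/-- The form norm `‖u‖_Q = (Q(u) + ‖u‖₂²)^{1/2}`. -/
noncomputable def formNorm {X : Type*} (b : X → X → ℝ) (m : X → ℝ) (u : X → ℝ) : ℝ :=
  Real.sqrt (energy b u + ∑' x, u x ^ 2 * m x)

/-- `b` is a graph over `X`: symmetric, nonnegative, zero on the diagonal,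
with summable rows. -/
structure IsGraph {X : Type*} (b : X → X → ℝ) : Prop where
  symm : ∀ x y, b x y = b y x
  nonneg : ∀ x y, 0 ≤ b x y
  diag : ∀ x, b x x = 0
  row_summable : ∀ x, Summable (fun y => b x y)

/-- The graph `b` is connected: any two points are joined by a path of edges of
positive weight. -/
def GraphConnected {X : Type*} (b : X → X → ℝ) : Prop :=
  ∀ x y : X, Relation.ReflTransGen (fun a c => 0 < b a c) x y

/-- `(X,m)` is a finite discrete measure space: `m > 0` everywhere and `m(X) < ∞`. -/
structure FinMeasure {X : Type*} (m : X → ℝ) : Prop where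
  pos : ∀ x, 0 < m x
  summable : Summable m

/-- The graph `b` over `(X,m)` is canonically compactifiable: every function in
`D(Q)` is bounded. -/
def CanCompact {X : Type*} (b : X → X → ℝ) (m : X → ℝ) : Prop :=
  ∀ u : X → ℝ, MemDQ b m u → ∃ M : ℝ, ∀ x, |u x| ≤ M

/-- `u ∈ D(L)` with `L u = f` for the Neumann Laplacian `L`:
`u ∈ D(Q)`, `f ∈ ℓ²(X,m)` and `Q(u,v) = ⟨f,v⟩` for all `v ∈ D(Q)`. -/
def IsLap {X : Type*} (b : X → X → ℝ) (m : X → ℝ) (u f : X → ℝ) : Prop :=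
  MemDQ b m u ∧ MemL2 m f ∧
    ∀ v : X → ℝ, MemDQ b m v → energyBil b u v = ∑' x, f x * v x * m x

/-- The mean `ū = ⟨u,1⟩ / m(X)`. -/
noncomputable def mean {X : Type*} (m : X → ℝ) (u : X → ℝ) : ℝ :=
  (∑' x, u x * m x) / (∑' x, m x)

/-!
Integrating `Lu = h e^u - c` against the constant function `1` gives `∑ h e^u m = c m(X) > 0`, so
`h` is positive somewhere.

Conversely, solutions are up to an additive constant the critical points of the functional
`Q(u) / 2 + c ∑ u m - c m(X) log ∑ h e^u m`, which is invariant under adding constants and may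
therefore be minimised over functions vanishing at a base point. Canonical compactifiability, the
uniform boundedness principle and a Poincaré inequality bound the sup-norm of such functions by a
multiple of `√Q(u)`. Since `Q` is quadratic and the other two terms grow at most linearly in the
sup-norm, the functional is coercive. Minimising sequences are thus uniformly bounded and have
pointwise convergent subsequences; dominated convergence and the lower semicontinuity of `Q` show
that the limit is a minimiser. The same argument applies to any `g ∈ ℓ²(X,m)` of positive integral
in place of `c`.
-/

section

open Filter Topology

variable {X : Type*} {b : X → X → ℝ} {m w g h u v : X → ℝ} {R S : ℝ}

/-! ### Weighted sums of bounded functions -/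

theorem abs_mul_le_of_abs_le (hg : ∀ x, |g x| ≤ R) (x : X) : |w x * g x| ≤ R * |w x| := by
  rw [abs_mul, mul_comm]
  exact mul_le_mul_of_nonneg_right (hg x) (abs_nonneg _)

theorem summable_mul_of_abs_le (hw : Summable w) (hg : ∀ x, |g x| ≤ R) :
    Summable fun x => w x * g x :=
  (hw.abs.mul_left R).of_norm_bounded (abs_mul_le_of_abs_le hg)

theorem abs_tsum_mul_le (hw : Summable w) (hg : ∀ x, |g x| ≤ R) :
    |∑' x, w x * g x| ≤ R * ∑' x, |w x| :=
  tsum_of_norm_bounded (f := fun x => w x * g x) (hw.abs.hasSum.mul_left R)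
    (abs_mul_le_of_abs_le hg)

theorem tendsto_tsum_mul_of_abs_le {ι : Type*} {l : Filter ι} {G : ι → X → ℝ} (hw : Summable w)
    (hG : ∀ i x, |G i x| ≤ R) (hlim : ∀ x, Tendsto (G · x) l (𝓝 (g x))) :
    Tendsto (fun i => ∑' x, w x * G i x) l (𝓝 (∑' x, w x * g x)) :=
  tendsto_tsum_of_dominated_convergence (hw.abs.mul_left R) (fun x => (hlim x).const_mul (w x))
    (.of_forall fun i => abs_mul_le_of_abs_le (hG i))

theorem abs_exp_le_exp_of_abs_le (hu : ∀ x, |u x| ≤ R) (x : X) :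
    |Real.exp (u x)| ≤ Real.exp R := by
  rw [Real.abs_exp]
  exact Real.exp_le_exp.2 (le_of_abs_le (hu x))

theorem hasDerivAt_tsum_mul_exp (hw : Summable w) (hu : ∀ x, |u x| ≤ R) (hv : ∀ x, |v x| ≤ S) :
    HasDerivAt (fun t => ∑' x, w x * Real.exp (u x + t * v x))
      (∑' x, w x * (Real.exp (u x) * v x)) 0 := by
  have hterm (x : X) (t : ℝ) : HasDerivAt (fun t => w x * Real.exp (u x + t * v x))
      (w x * (Real.exp (u x + t * v x) * v x)) t := by
    simpa using ((((hasDerivAt_id t).mul_const (v x)).const_add (u x)).exp).const_mul (w x)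
  have hline {t : ℝ} (ht : t ∈ Metric.ball (0 : ℝ) 1) (x : X) : |u x + t * v x| ≤ R + S := by
    have ht : |t| ≤ 1 := by simpa using (Metric.mem_ball.1 ht).le
    calc |u x + t * v x| ≤ |u x| + |t| * |v x| := (abs_add_le _ _).trans_eq (by rw [abs_mul])
      _ ≤ R + S := add_le_add (hu x) ((mul_le_of_le_one_left (abs_nonneg _) ht).trans (hv x))
  have hbound {t : ℝ} (ht : t ∈ Metric.ball (0 : ℝ) 1) (x : X) :
      |Real.exp (u x + t * v x) * v x| ≤ Real.exp (R + S) * S := by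
    rw [abs_mul]
    exact mul_le_mul (abs_exp_le_exp_of_abs_le (hline ht) x) (hv x) (abs_nonneg _)
      (Real.exp_pos _).le
  have hzero : (0 : ℝ) ∈ Metric.ball (0 : ℝ) 1 := Metric.mem_ball_self one_pos
  simpa using hasDerivAt_tsum_of_isPreconnected (hw.abs.mul_left (Real.exp (R + S) * S))
    Metric.isOpen_ball (convex_ball (0 : ℝ) 1).isPreconnected (fun x t _ => hterm x t)
    (fun x t ht => abs_mul_le_of_abs_le (hbound ht) x) hzero
    (summable_mul_of_abs_le hw (abs_exp_le_exp_of_abs_le (hline hzero))) hzero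

theorem exists_subseq_tendsto_of_abs_le [Countable X] {G : ℕ → X → ℝ} (hG : ∀ n x, |G n x| ≤ R) :
    ∃ (g : X → ℝ) (φ : ℕ → ℕ), StrictMono φ ∧
      ∀ x, Tendsto (fun n => G (φ n) x) atTop (𝓝 (g x)) := by
  obtain ⟨g, -, φ, hφ, hlim⟩ :=
    (isCompact_univ_pi fun _ : X => isCompact_Icc (a := -R) (b := R)).tendsto_subseq
      (fun n x _ => abs_le.1 (hG n x))
  exact ⟨g, φ, hφ, tendsto_pi_nhds.1 hlim⟩

/-! ### The form domain -/

theorem FinMeasure.countable (hm : FinMeasure m) : Countable X := by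
  have hsupp : Function.support m = Set.univ :=
    Set.eq_univ_of_forall fun x => (hm.pos x).ne'
  exact Set.countable_univ_iff.1 (hsupp ▸ hm.summable.countable_support)

theorem MemL2.const_mul (hu : MemL2 m u) (t : ℝ) : MemL2 m fun x => t * u x :=
  (hu.mul_left (t ^ 2)).congr fun x => by ring

theorem MemL2.add (hm : ∀ x, 0 ≤ m x) (hu : MemL2 m u) (hv : MemL2 m v) :
    MemL2 m fun x => u x + v x :=
  .of_nonneg_of_le (fun x => mul_nonneg (sq_nonneg _) (hm x))
    (fun x => (mul_le_mul_of_nonneg_right add_sq_le (hm x)).trans_eq (by ring))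
    ((Summable.add hu hv).mul_left 2)

theorem MemL2.mul_of_abs_le (hu : MemL2 m u) (hg : ∀ x, |g x| ≤ R) :
    MemL2 m fun x => u x * g x := by
  have hg2 (x : X) : |g x ^ 2| ≤ R ^ 2 := by
    rw [abs_pow]
    exact pow_le_pow_left₀ (abs_nonneg _) (hg x) 2
  exact (summable_mul_of_abs_le hu hg2).congr fun x => by ring

theorem MemL2.summable_mul (hm : FinMeasure m) (hu : MemL2 m u) : Summable fun x => u x * m x := by
  refine (Summable.add hu hm.summable).of_norm_bounded fun x => ?_
  rw [Real.norm_eq_abs, abs_mul, abs_of_pos (hm.pos x), ← add_one_mul, ← sq_abs]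
  exact mul_le_mul_of_nonneg_right (by nlinarith [sq_nonneg (|u x| - 1)]) (hm.pos x).le

theorem FinMeasure.memL2_of_abs_le (hm : FinMeasure m) (hg : ∀ x, |g x| ≤ R) : MemL2 m g := by
  have hone : MemL2 m fun _ => 1 := hm.summable.congr fun x => by ring
  simpa using hone.mul_of_abs_le hg

theorem FinMeasure.tsum_sq_nonneg (hm : FinMeasure m) (u : X → ℝ) : 0 ≤ ∑' x, u x ^ 2 * m x :=
  tsum_nonneg fun x => mul_nonneg (sq_nonneg _) (hm.pos x).le

theorem IsGraph.energy_term_nonneg (hb : IsGraph b) (u : X → ℝ) (p : X × X) :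
    0 ≤ b p.1 p.2 * (u p.1 - u p.2) ^ 2 :=
  mul_nonneg (hb.nonneg _ _) (sq_nonneg _)

theorem IsGraph.energy_nonneg (hb : IsGraph b) (u : X → ℝ) : 0 ≤ energy b u :=
  mul_nonneg (by norm_num) (tsum_nonneg (hb.energy_term_nonneg u))

theorem IsGraph.summable_energyBil (hb : IsGraph b) (hu : FinEnergy b u) (hv : FinEnergy b v) :
    Summable fun p : X × X => b p.1 p.2 * (u p.1 - u p.2) * (v p.1 - v p.2) := by
  refine (hu.add hv).of_norm_bounded fun p => ?_
  rw [Real.norm_eq_abs, mul_assoc, abs_mul, abs_of_nonneg (hb.nonneg _ _), ← mul_add, abs_mul,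
    ← sq_abs (u p.1 - u p.2), ← sq_abs (v p.1 - v p.2)]
  refine mul_le_mul_of_nonneg_left ?_ (hb.nonneg _ _)
  nlinarith [two_mul_le_add_sq |u p.1 - u p.2| |v p.1 - v p.2|,
    mul_nonneg (abs_nonneg (u p.1 - u p.2)) (abs_nonneg (v p.1 - v p.2))]

theorem IsGraph.hasSum_energy_add_mul (hb : IsGraph b) (hu : FinEnergy b u) (hv : FinEnergy b v)
    (t : ℝ) :
    HasSum (fun p : X × X => b p.1 p.2 * ((u p.1 + t * v p.1) - (u p.2 + t * v p.2)) ^ 2)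
      (2 * (energy b u + 2 * t * energyBil b u v + t ^ 2 * energy b v)) := by
  have hsum := (hu.hasSum.add ((hb.summable_energyBil hu hv).hasSum.mul_left (2 * t))).add
    (hv.hasSum.mul_left (t ^ 2))
  convert! hsum using 1
  · funext p
    ring
  · rw [energy, energyBil, energy]
    ring

theorem IsGraph.energy_add_mul (hb : IsGraph b) (hu : FinEnergy b u) (hv : FinEnergy b v) (t : ℝ) :
    energy b (fun x => u x + t * v x) =
      energy b u + 2 * t * energyBil b u v + t ^ 2 * energy b v := by
  rw [energy, (hb.hasSum_energy_add_mul hu hv t).tsum_eq]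
  ring

theorem energy_add_const (u : X → ℝ) (s : ℝ) : energy b (fun x => u x + s) = energy b u := by
  simp only [energy, add_sub_add_right_eq_sub]

theorem energyBil_add_const (u v : X → ℝ) (s : ℝ) :
    energyBil b (fun x => u x + s) v = energyBil b u v := by
  simp only [energyBil, add_sub_add_right_eq_sub]

theorem IsGraph.mul_sq_sub_le_energy (hb : IsGraph b) (hu : FinEnergy b u) (x y : X) :
    b x y * (u x - u y) ^ 2 ≤ 2 * energy b u := by
  have hterm := hu.le_tsum (x, y) fun p _ => hb.energy_term_nonneg u p
  rw [energy]
  linarith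

theorem IsGraph.finEnergy_and_energy_le_of_tendsto {ι : Type*} {l : Filter ι} [NeBot l]
    {U : ι → X → ℝ} {E : ℝ} (hb : IsGraph b) (hU : ∀ i, FinEnergy b (U i))
    (hlim : ∀ x, Tendsto (U · x) l (𝓝 (u x))) (hE : Tendsto (fun i => energy b (U i)) l (𝓝 E)) :
    FinEnergy b u ∧ energy b u ≤ E := by
  have hfin (T : Finset (X × X)) : ∑ p ∈ T, b p.1 p.2 * (u p.1 - u p.2) ^ 2 ≤ 2 * E := by
    refine le_of_tendsto_of_tendsto'
      (tendsto_finsetSum T fun p _ => (((hlim p.1).sub (hlim p.2)).pow 2).const_mul (b p.1 p.2))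
      (hE.const_mul 2) fun i => ?_
    have hpartial := (hU i).sum_le_tsum T fun p _ => hb.energy_term_nonneg (U i) p
    rw [energy]
    linarith
  have hfe : FinEnergy b u := summable_of_sum_le (hb.energy_term_nonneg u) hfin
  refine ⟨hfe, ?_⟩
  have hsum := hfe.tsum_le_of_sum_le hfin
  rw [energy]
  linarith

theorem FinMeasure.memDQ_const (hm : FinMeasure m) (s : ℝ) : MemDQ b m fun _ => s := by
  refine ⟨hm.memL2_of_abs_le fun _ => le_rfl, ?_⟩
  simp [FinEnergy, summable_zero]

theorem MemDQ.add_const (hm : FinMeasure m) (hu : MemDQ b m u) (s : ℝ) :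
    MemDQ b m fun x => u x + s := by
  refine ⟨hu.1.add (fun x => (hm.pos x).le) (hm.memDQ_const (b := b) s).1, ?_⟩
  simpa only [FinEnergy, add_sub_add_right_eq_sub] using hu.2

theorem MemDQ.add_mul (hb : IsGraph b) (hm : FinMeasure m) (hu : MemDQ b m u) (hv : MemDQ b m v)
    (t : ℝ) : MemDQ b m fun x => u x + t * v x :=
  ⟨hu.1.add (fun x => (hm.pos x).le) (hv.1.const_mul t),
    (hb.hasSum_energy_add_mul hu.2 hv.2 t).summable⟩

theorem IsGraph.finEnergy_single [DecidableEq X] (hb : IsGraph b) (o : X) (t : ℝ) :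
    FinEnergy b (Pi.single o t) := by
  have hrow : Summable fun p : X × X => if p.1 = o then b p.1 p.2 * t ^ 2 else 0 := by
    refine (Function.Injective.summable_iff (Prod.mk_right_injective o) fun p hp => ?_).1 ?_
    · exact if_neg fun h => hp ⟨p.2, Prod.ext h.symm rfl⟩
    · simpa [Function.comp_def] using (hb.row_summable o).mul_right (t ^ 2)
  have hcol : Summable fun p : X × X => if p.2 = o then b p.1 p.2 * t ^ 2 else 0 := by
    simpa only [Function.comp_def, Equiv.prodComm_apply, Prod.fst_swap, Prod.snd_swap, hb.symm]
      using (Equiv.prodComm X X).summable_iff.2 hrow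
  refine .of_nonneg_of_le (hb.energy_term_nonneg _) (fun p => ?_) (hrow.add hcol)
  have hedge := mul_nonneg (hb.nonneg p.1 p.2) (sq_nonneg t)
  simp only [Pi.single_apply]
  split_ifs <;> linarith

theorem IsGraph.memDQ_single [DecidableEq X] (hb : IsGraph b) (hm : FinMeasure m) (o : X) (t : ℝ) :
    MemDQ b m (Pi.single o t) := by
  refine ⟨hm.memL2_of_abs_le (R := |t|) fun x => ?_, hb.finEnergy_single o t⟩
  rw [Pi.single_apply]
  split_ifs <;> simp

/-! ### The form norm dominates the sup-norm -/

theorem memℓp_two_iff {ι : Type*} {f : ι → ℝ} : Memℓp f 2 ↔ Summable fun i => f i ^ 2 := by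
  simp [memℓp_gen_iff]

theorem lp_two_norm_eq_sqrt_tsum {ι : Type*} (f : lp (fun _ : ι => ℝ) 2) :
    ‖f‖ = √(∑' i, f i ^ 2) := by
  simp [lp.norm_eq_tsum_rpow, Real.sqrt_eq_rpow]

/-- The form domain `D(Q)` as a space of pairs in `ℓ²(X) × ℓ²(X × X)`: the function `u` is encoded
by `x ↦ √(m x) u(x)` together with its weighted gradient `(x, y) ↦ √(b x y / 2) (u(x) - u(y))`. The
encoding makes completeness of `D(Q)` a closedness statement. -/
noncomputable def formSpace (b : X → X → ℝ) (m : X → ℝ) :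
    Submodule ℝ (lp (fun _ : X => ℝ) 2 × lp (fun _ : X × X => ℝ) 2) where
  carrier := {f | ∀ x y, f.2 (x, y) = √(b x y / 2) * (f.1 x / √(m x) - f.1 y / √(m y))}
  zero_mem' := by simp
  add_mem' {f g} hf hg x y := by
    simp only [Prod.fst_add, Prod.snd_add, lp.coeFn_add, Pi.add_apply, hf x y, hg x y]
    ring
  smul_mem' t f hf x y := by
    simp only [Prod.smul_fst, Prod.smul_snd, lp.coeFn_smul, Pi.smul_apply, smul_eq_mul, hf x y]
    ring

namespace formSpace

theorem isClosed (b : X → X → ℝ) (m : X → ℝ) :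
    IsClosed (formSpace b m : Set (lp (fun _ : X => ℝ) 2 × lp (fun _ : X × X => ℝ) 2)) := by
  have heval (x : X) : Continuous fun f : lp (fun _ : X => ℝ) 2 => f x :=
    (lp.evalCLM ℝ (fun _ : X => ℝ) 2 x).continuous
  have hgrad (p : X × X) : Continuous fun f : lp (fun _ : X × X => ℝ) 2 => f p :=
    (lp.evalCLM ℝ (fun _ : X × X => ℝ) 2 p).continuous
  have hset : (formSpace b m : Set (lp (fun _ : X => ℝ) 2 × lp (fun _ : X × X => ℝ) 2)) =
      ⋂ (x) (y), {f | f.2 (x, y) = √(b x y / 2) * (f.1 x / √(m x) - f.1 y / √(m y))} := by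
    ext f
    simp [formSpace]
  rw [hset]
  exact isClosed_iInter fun x => isClosed_iInter fun y =>
    isClosed_eq ((hgrad (x, y)).comp continuous_snd)
      (((((heval x).comp continuous_fst).div_const _).sub
        (((heval y).comp continuous_fst).div_const _)).const_mul _)

instance : CompleteSpace (formSpace b m) := (isClosed b m).completeSpace_coe

/-- The value at `x` of the function encoded by an element of `formSpace b m`. -/
noncomputable def eval (b : X → X → ℝ) (m : X → ℝ) (x : X) : formSpace b m →L[ℝ] ℝ :=
  (√(m x))⁻¹ • (lp.evalCLM ℝ (fun _ : X => ℝ) 2 x ∘L ContinuousLinearMap.fst ℝ _ _ ∘L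
    (formSpace b m).subtypeL)

theorem eval_apply (f : formSpace b m) (x : X) : eval b m x f = f.1.1 x / √(m x) := by
  rw [div_eq_inv_mul]
  rfl

theorem memDQ_eval (hb : IsGraph b) (hm : FinMeasure m) (f : formSpace b m) :
    MemDQ b m fun x => eval b m x f := by
  simp only [eval_apply]
  constructor
  · refine (memℓp_two_iff.1 (lp.memℓp f.1.1)).congr fun x => ?_
    rw [div_pow, Real.sq_sqrt (hm.pos x).le, div_mul_cancel₀ _ (hm.pos x).ne']
  · refine ((memℓp_two_iff.1 (lp.memℓp f.1.2)).mul_left 2).congr fun p => ?_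
    rw [f.2 p.1 p.2, mul_pow, Real.sq_sqrt (div_nonneg (hb.nonneg _ _) zero_le_two)]
    ring

theorem exists_eval_eq (hb : IsGraph b) (hm : FinMeasure m) (hu : MemDQ b m u) :
    ∃ f : formSpace b m, (∀ x, eval b m x f = u x) ∧ ‖f‖ ≤ formNorm b m u := by
  have hval (x : X) : (√(m x) * u x) ^ 2 = u x ^ 2 * m x := by
    rw [mul_pow, Real.sq_sqrt (hm.pos x).le, mul_comm]
  have hgrad (p : X × X) : (√(b p.1 p.2 / 2) * (u p.1 - u p.2)) ^ 2 =
      1 / 2 * (b p.1 p.2 * (u p.1 - u p.2) ^ 2) := by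
    rw [mul_pow, Real.sq_sqrt (div_nonneg (hb.nonneg _ _) zero_le_two)]
    ring
  have hdiv (x : X) : √(m x) * u x / √(m x) = u x :=
    mul_div_cancel_left₀ _ (Real.sqrt_pos.2 (hm.pos x)).ne'
  let F : lp (fun _ : X => ℝ) 2 :=
    ⟨fun x => √(m x) * u x, memℓp_two_iff.2 (hu.1.congr fun x => (hval x).symm)⟩
  let G : lp (fun _ : X × X => ℝ) 2 :=
    ⟨fun p => √(b p.1 p.2 / 2) * (u p.1 - u p.2),
      memℓp_two_iff.2 ((hu.2.mul_left (1 / 2)).congr fun p => (hgrad p).symm)⟩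
  have hF : ‖F‖ ≤ formNorm b m u := by
    rw [lp_two_norm_eq_sqrt_tsum, formNorm, show ∑' x, F x ^ 2 = _ from tsum_congr hval]
    exact Real.sqrt_le_sqrt (le_add_of_nonneg_left (hb.energy_nonneg u))
  have hG : ‖G‖ ≤ formNorm b m u := by
    rw [lp_two_norm_eq_sqrt_tsum, formNorm, show ∑' p, G p ^ 2 = _ from tsum_congr hgrad,
      tsum_mul_left]
    exact Real.sqrt_le_sqrt (le_add_of_nonneg_right (hm.tsum_sq_nonneg u))
  refine ⟨⟨(F, G), fun x y => ?_⟩, fun x => (eval_apply _ x).trans (hdiv x), max_le hF hG⟩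
  exact (congrArg₂ (fun s t => √(b x y / 2) * (s - t)) (hdiv x) (hdiv y)).symm

end formSpace

theorem CanCompact.exists_abs_le_mul_formNorm (hcc : CanCompact b m) (hb : IsGraph b)
    (hm : FinMeasure m) :
    ∃ C, 0 ≤ C ∧ ∀ u, MemDQ b m u → ∀ x, |u x| ≤ C * formNorm b m u := by
  obtain ⟨C, hC⟩ := banach_steinhaus (g := formSpace.eval b m)
    fun f => hcc _ (formSpace.memDQ_eval hb hm f)
  refine ⟨|C|, abs_nonneg C, fun u hu x => ?_⟩
  obtain ⟨f, hfu, hf⟩ := formSpace.exists_eval_eq hb hm hu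
  calc |u x| = ‖formSpace.eval b m x f‖ := by rw [hfu, Real.norm_eq_abs]
    _ ≤ |C| * formNorm b m u :=
      ContinuousLinearMap.le_of_opNorm_le_of_le _ ((hC x).trans (le_abs_self C)) hf

/-! ### The Poincaré inequality -/

theorem IsGraph.exists_sq_sub_le_mul_energy (hb : IsGraph b) {o x : X}
    (hox : Relation.ReflTransGen (fun y z => 0 < b y z) o x) :
    ∃ C, 0 ≤ C ∧ ∀ u, FinEnergy b u → (u x - u o) ^ 2 ≤ C * energy b u := by
  induction hox with
  | refl => exact ⟨0, le_rfl, fun u _ => by simp⟩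
  | @tail y z _ hyz ih =>
    obtain ⟨C, hC, hCu⟩ := ih
    refine ⟨2 * (C + 2 / b y z), by positivity, fun u hu => ?_⟩
    have hedge : (u z - u y) ^ 2 ≤ 2 / b y z * energy b u := by
      rw [div_mul_eq_mul_div, le_div_iff₀ hyz, mul_comm, sub_sq_comm]
      exact hb.mul_sq_sub_le_energy hu y z
    calc (u z - u o) ^ 2 = ((u z - u y) + (u y - u o)) ^ 2 := by ring
      _ ≤ 2 * ((u z - u y) ^ 2 + (u y - u o) ^ 2) := add_sq_le
      _ ≤ 2 * (2 / b y z * energy b u + C * energy b u) := by gcongr; exact hCu u hu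
      _ = 2 * (C + 2 / b y z) * energy b u := by ring

theorem exists_finset_mul_tsum_compl_le {ε : ℝ} (w : X → ℝ) (a : ℝ) (hε : 0 < ε) :
    ∃ F : Finset X, a * ∑' x : {x // x ∉ F}, w x ≤ ε := by
  have htail := (tendsto_tsum_compl_atTop_zero w).const_mul a
  rw [mul_zero] at htail
  exact (htail.eventually_le_const hε).exists

-- Off a finite set `F` of almost full measure the sum is absorbed by means of the sup bound; on `F`
-- the values of `u` are controlled along paths from `o`.
theorem CanCompact.exists_tsum_sq_le_mul_energy (hcc : CanCompact b m) (hb : IsGraph b)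
    (hconn : GraphConnected b) (hm : FinMeasure m) (o : X) :
    ∃ C, 0 ≤ C ∧ ∀ u, MemDQ b m u → u o = 0 → ∑' x, u x ^ 2 * m x ≤ C * energy b u := by
  obtain ⟨C, -, hC⟩ := hcc.exists_abs_le_mul_formNorm hb hm
  choose P hP hPu using fun x => hb.exists_sq_sub_le_mul_energy (hconn o x)
  obtain ⟨F, hF⟩ := exists_finset_mul_tsum_compl_le m (C ^ 2) one_half_pos
  set D := ∑ x ∈ F, P x * m x
  have hD : 0 ≤ D := Finset.sum_nonneg fun x _ => mul_nonneg (hP x) (hm.pos x).le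
  refine ⟨2 * D + 1, by positivity, fun u hu huo => ?_⟩
  set E := energy b u
  set N := ∑' x, u x ^ 2 * m x
  have hEN : 0 ≤ E + N := add_nonneg (hb.energy_nonneg u) (hm.tsum_sq_nonneg u)
  have hsup (x : X) : u x ^ 2 ≤ C ^ 2 * (E + N) := by
    rw [← sq_abs, ← Real.sq_sqrt hEN, ← mul_pow]
    exact pow_le_pow_left₀ (abs_nonneg _) (hC u hu x) 2
  have hfinite : ∑ x ∈ F, u x ^ 2 * m x ≤ D * E := by
    rw [Finset.sum_mul]
    refine Finset.sum_le_sum fun x _ => ?_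
    rw [mul_right_comm]
    exact mul_le_mul_of_nonneg_right (by simpa [huo] using hPu x u hu.2) (hm.pos x).le
  have htail : ∑' x : {x // x ∉ F}, u x ^ 2 * m x ≤ 1 / 2 * (E + N) := by
    calc ∑' x : {x // x ∉ F}, u x ^ 2 * m x ≤ ∑' x : {x // x ∉ F}, C ^ 2 * (E + N) * m x :=
          Summable.tsum_le_tsum (fun x => mul_le_mul_of_nonneg_right (hsup x) (hm.pos x).le)
            (hu.1.subtype _) ((hm.summable.subtype _).mul_left _)
      _ = C ^ 2 * (∑' x : {x // x ∉ F}, m x) * (E + N) := by rw [tsum_mul_left]; ring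
      _ ≤ 1 / 2 * (E + N) := mul_le_mul_of_nonneg_right hF hEN
  have hsplit : _ = N := hu.1.sum_add_tsum_subtype_compl F
  linarith

theorem CanCompact.exists_abs_le_mul_sqrt_energy (hcc : CanCompact b m) (hb : IsGraph b)
    (hconn : GraphConnected b) (hm : FinMeasure m) (o : X) :
    ∃ K, 0 ≤ K ∧ ∀ u, MemDQ b m u → u o = 0 → ∀ x, |u x| ≤ K * √(energy b u) := by
  obtain ⟨C, hC, hCu⟩ := hcc.exists_abs_le_mul_formNorm hb hm
  obtain ⟨D, hD, hDu⟩ := hcc.exists_tsum_sq_le_mul_energy hb hconn hm o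
  refine ⟨C * √(1 + D), by positivity, fun u hu huo x => (hCu u hu x).trans ?_⟩
  rw [mul_assoc, ← Real.sqrt_mul (by positivity), one_add_mul]
  exact mul_le_mul_of_nonneg_left (Real.sqrt_le_sqrt (by gcongr; exact hDu u hu huo)) hC

/-! ### The Kazdan–Warner functional -/

/-- The functional whose critical points solve `Lu = h e^u - g` up to an additive constant. The
weights are `μ = g m` and `w = h m`; the logarithm makes the functional invariant under adding
constants to `u`. It is meaningful only where `∑ w e^u > 0`, see `admissible`. -/
noncomputable def kazdanWarner (b : X → X → ℝ) (μ w u : X → ℝ) : ℝ :=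
  energy b u / 2 + ∑' x, μ x * u x - (∑' x, μ x) * Real.log (∑' x, w x * Real.exp (u x))

/-- The part of the form domain `D(Q)` on which the Kazdan–Warner functional is minimised. -/
def admissible (b : X → X → ℝ) (m w : X → ℝ) : Set (X → ℝ) :=
  {u | MemDQ b m u ∧ 0 < ∑' x, w x * Real.exp (u x)}

variable {μ : X → ℝ}

theorem tsum_mul_exp_add_const (w u : X → ℝ) (s : ℝ) :
    ∑' x, w x * Real.exp (u x + s) = Real.exp s * ∑' x, w x * Real.exp (u x) := by
  rw [← tsum_mul_left]
  exact tsum_congr fun x => by rw [Real.exp_add]; ring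

theorem add_const_mem_admissible (hm : FinMeasure m) (hu : u ∈ admissible b m w) (s : ℝ) :
    (fun x => u x + s) ∈ admissible b m w := by
  refine ⟨hu.1.add_const hm s, ?_⟩
  rw [tsum_mul_exp_add_const]
  exact mul_pos (Real.exp_pos s) hu.2

theorem kazdanWarner_add_const (hμ : Summable μ) (hu : ∀ x, |u x| ≤ R)
    (hwu : 0 < ∑' x, w x * Real.exp (u x)) (s : ℝ) :
    kazdanWarner b μ w (fun x => u x + s) = kazdanWarner b μ w u := by
  have hmean : ∑' x, μ x * (u x + s) = ∑' x, μ x * u x + (∑' x, μ x) * s := by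
    rw [← tsum_mul_right, ← (summable_mul_of_abs_le hμ hu).tsum_add (hμ.mul_right s)]
    exact tsum_congr fun x => mul_add _ _ _
  rw [kazdanWarner, kazdanWarner, energy_add_const, hmean, tsum_mul_exp_add_const,
    Real.log_mul (Real.exp_ne_zero s) hwu.ne', Real.log_exp]
  ring

theorem admissible_nonempty (hb : IsGraph b) (hm : FinMeasure m) (hw : Summable w)
    (hpos : ∃ x, 0 < w x) : (admissible b m w).Nonempty := by
  classical
  obtain ⟨o, ho⟩ := hpos
  have hsum (t : ℝ) : ∑' x, w x * Real.exp (Pi.single (M := fun _ => ℝ) o t x) =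
      ∑' x, w x + w o * (Real.exp t - 1) := by
    rw [← tsum_pi_single o (w o * (Real.exp t - 1)),
      ← hw.tsum_add (hasSum_pi_single o _).summable]
    refine tsum_congr fun x => ?_
    obtain rfl | hx := eq_or_ne x o
    · simp only [Pi.single_eq_same]
      ring
    · simp only [Pi.single_eq_of_ne hx, Real.exp_zero, mul_one, add_zero]
  have hlim : Tendsto (fun t => ∑' x, w x + w o * (Real.exp t - 1)) atTop atTop :=
    tendsto_atTop_add_const_left _ _ ((tendsto_atTop_add_const_right _ (-1)
      Real.tendsto_exp_atTop).const_mul_atTop ho)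
  obtain ⟨t, ht⟩ := (hlim.eventually_gt_atTop 0).exists
  exact ⟨Pi.single o t, hb.memDQ_single hm o t, by rwa [hsum]⟩

theorem log_tsum_mul_exp_le (hw : Summable w) (hu : ∀ x, |u x| ≤ R)
    (hwu : 0 < ∑' x, w x * Real.exp (u x)) :
    Real.log (∑' x, w x * Real.exp (u x)) ≤ R + Real.log (∑' x, |w x|) := by
  have hle : ∑' x, w x * Real.exp (u x) ≤ Real.exp R * ∑' x, |w x| :=
    le_of_abs_le (abs_tsum_mul_le hw (abs_exp_le_exp_of_abs_le hu))
  have hH : 0 < ∑' x, |w x| := pos_of_mul_pos_right (hwu.trans_le hle) (Real.exp_pos R).le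
  calc Real.log (∑' x, w x * Real.exp (u x)) ≤ Real.log (Real.exp R * ∑' x, |w x|) :=
        Real.log_le_log hwu hle
    _ = R + Real.log (∑' x, |w x|) := by
        rw [Real.log_mul (Real.exp_ne_zero R) hH.ne', Real.log_exp]

theorem exp_le_tsum_mul_exp_of_kazdanWarner_le {r : ℝ} (hb : IsGraph b) (hμ : Summable μ)
    (hM : 0 < ∑' x, μ x) (hu : ∀ x, |u x| ≤ R) (hwu : 0 < ∑' x, w x * Real.exp (u x))
    (hr : kazdanWarner b μ w u ≤ r) :
    Real.exp (-(R * ∑' x, |μ x| + r) / ∑' x, μ x) ≤ ∑' x, w x * Real.exp (u x) := by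
  rw [← Real.le_log_iff_exp_le hwu, div_le_iff₀ hM]
  have hmean := neg_le_of_abs_le (abs_tsum_mul_le hμ hu)
  have henergy := hb.energy_nonneg u
  rw [kazdanWarner] at hr
  linarith

theorem exists_energy_le_mul_kazdanWarner_add (hb : IsGraph b) (hconn : GraphConnected b)
    (hm : FinMeasure m) (hcc : CanCompact b m) (hμ : Summable μ) (hM : 0 ≤ ∑' x, μ x)
    (hw : Summable w) (o : X) :
    ∃ B, ∀ u ∈ admissible b m w, u o = 0 → energy b u ≤ 4 * (kazdanWarner b μ w u + B) := by
  obtain ⟨K, -, hK⟩ := hcc.exists_abs_le_mul_sqrt_energy hb hconn hm o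
  set M := ∑' x, μ x
  set H := ∑' x, |w x|
  set A := K * (∑' x, |μ x| + M)
  refine ⟨A ^ 2 + M * Real.log H, fun u hu huo => ?_⟩
  have hsup := hK u hu.1 huo
  set s := √(energy b u)
  have hs : s ^ 2 = energy b u := Real.sq_sqrt (hb.energy_nonneg u)
  have hlog := mul_le_mul_of_nonneg_left (log_tsum_mul_exp_le hw hsup hu.2) hM
  have hmean := neg_le_of_abs_le (abs_tsum_mul_le hμ hsup)
  have hlower : s ^ 2 / 2 - A * s - M * Real.log H ≤ kazdanWarner b μ w u := by
    rw [kazdanWarner, ← hs]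
    linarith
  have hyoung : A * s ≤ s ^ 2 / 4 + A ^ 2 := by linarith [sq_nonneg (s / 2 - A)]
  linarith

/-! ### Existence of a minimiser -/

theorem mem_admissible_and_kazdanWarner_le_of_tendsto {ι : Type*} {l : Filter ι} [NeBot l]
    {U : ι → X → ℝ} {J : ℝ} (hb : IsGraph b) (hm : FinMeasure m) (hμ : Summable μ)
    (hM : 0 < ∑' x, μ x) (hw : Summable w) (hU : ∀ i, U i ∈ admissible b m w)
    (hR : ∀ i x, |U i x| ≤ R) (hlim : ∀ x, Tendsto (U · x) l (𝓝 (u x)))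
    (hJ : Tendsto (fun i => kazdanWarner b μ w (U i)) l (𝓝 J)) :
    u ∈ admissible b m w ∧ kazdanWarner b μ w u ≤ J := by
  have hmean := tendsto_tsum_mul_of_abs_le hμ hR hlim
  have hexp : Tendsto (fun i => ∑' x, w x * Real.exp (U i x)) l
      (𝓝 (∑' x, w x * Real.exp (u x))) :=
    tendsto_tsum_mul_of_abs_le hw (fun i => abs_exp_le_exp_of_abs_le (hR i))
      fun x => (Real.continuous_exp.tendsto _).comp (hlim x)
  have hlower : ∀ᶠ i in l, Real.exp (-(R * ∑' x, |μ x| + (J + 1)) / ∑' x, μ x) ≤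
      ∑' x, w x * Real.exp (U i x) := by
    filter_upwards [hJ.eventually_le_const (lt_add_one J)] with i hi
    exact exp_le_tsum_mul_exp_of_kazdanWarner_le hb hμ hM (hR i) (hU i).2 hi
  have hpos : 0 < ∑' x, w x * Real.exp (u x) :=
    (Real.exp_pos _).trans_le (ge_of_tendsto hexp hlower)
  have henergy : Tendsto (fun i => energy b (U i)) l
      (𝓝 (2 * (J - ∑' x, μ x * u x +
        (∑' x, μ x) * Real.log (∑' x, w x * Real.exp (u x))))) := by
    refine (((hJ.sub hmean).add ((hexp.log hpos.ne').const_mul (∑' x, μ x))).const_mul 2).congr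
      fun i => ?_
    rw [kazdanWarner]
    ring
  obtain ⟨hfe, hle⟩ := hb.finEnergy_and_energy_le_of_tendsto (fun i => (hU i).1.2) hlim henergy
  have hu (x : X) : |u x| ≤ R := le_of_tendsto' (hlim x).abs fun i => hR i x
  refine ⟨⟨⟨hm.memL2_of_abs_le hu, hfe⟩, hpos⟩, ?_⟩
  rw [kazdanWarner]
  linarith

theorem exists_mem_admissible_eq_zero (hm : FinMeasure m) (hcc : CanCompact b m) (hμ : Summable μ)
    (hu : u ∈ admissible b m w) (o : X) :
    ∃ v ∈ admissible b m w, v o = 0 ∧ kazdanWarner b μ w v = kazdanWarner b μ w u := by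
  obtain ⟨R, hR⟩ := hcc u hu.1
  exact ⟨_, add_const_mem_admissible hm hu (-u o), add_neg_cancel (u o),
    kazdanWarner_add_const hμ hR hu.2 _⟩

theorem exists_isMinOn_kazdanWarner (hb : IsGraph b) (hconn : GraphConnected b)
    (hm : FinMeasure m) (hcc : CanCompact b m) (hμ : Summable μ) (hM : 0 < ∑' x, μ x)
    (hw : Summable w) (hpos : ∃ x, 0 < w x) :
    ∃ u ∈ admissible b m w, IsMinOn (kazdanWarner b μ w) (admissible b m w) u := by
  have := hm.countable
  obtain ⟨v, hv⟩ := admissible_nonempty hb hm hw hpos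
  obtain ⟨o, -⟩ := hpos
  obtain ⟨B, hB⟩ := exists_energy_le_mul_kazdanWarner_add hb hconn hm hcc hμ hM.le hw o
  obtain ⟨K, hK, hKu⟩ := hcc.exists_abs_le_mul_sqrt_energy hb hconn hm o
  set N : Set (X → ℝ) := {u ∈ admissible b m w | u o = 0}
  have hne : (kazdanWarner b μ w '' N).Nonempty := by
    obtain ⟨u, hu, huo, -⟩ := exists_mem_admissible_eq_zero (μ := μ) hm hcc hμ hv o
    exact ⟨_, u, ⟨hu, huo⟩, rfl⟩
  have hbdd : BddBelow (kazdanWarner b μ w '' N) := by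
    refine ⟨-B, ?_⟩
    rintro _ ⟨u, ⟨hu, huo⟩, rfl⟩
    linarith [hB u hu huo, hb.energy_nonneg u]
  obtain ⟨r, hanti, hlim, hr⟩ := exists_seq_tendsto_sInf hne hbdd
  choose U hUN hUr using hr
  have hbound (n : ℕ) (x : X) : |U n x| ≤ K * √(4 * (r 0 + B)) := by
    have henergy : energy b (U n) ≤ 4 * (r 0 + B) :=
      (hB (U n) (hUN n).1 (hUN n).2).trans (by rw [hUr]; gcongr; exact hanti n.zero_le)
    exact (hKu (U n) (hUN n).1.1 (hUN n).2 x).trans (by gcongr)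
  obtain ⟨u, φ, hφ, hu⟩ := exists_subseq_tendsto_of_abs_le hbound
  obtain ⟨hmem, hle⟩ := mem_admissible_and_kazdanWarner_le_of_tendsto hb hm hμ hM hw
    (fun n => (hUN (φ n)).1) (fun n => hbound (φ n)) hu
    (by simpa only [hUr, Function.comp_def] using hlim.comp hφ.tendsto_atTop)
  refine ⟨u, hmem, isMinOn_iff.2 fun v hv => hle.trans ?_⟩
  obtain ⟨v₀, hv₀, hv₀o, heq⟩ := exists_mem_admissible_eq_zero (μ := μ) hm hcc hμ hv o
  exact heq ▸ csInf_le hbdd ⟨v₀, ⟨hv₀, hv₀o⟩, rfl⟩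

/-! ### The Euler–Lagrange equation -/

theorem hasDerivAt_kazdanWarner (hb : IsGraph b) (hμ : Summable μ) (hw : Summable w)
    (hu : FinEnergy b u) (hv : FinEnergy b v) (huR : ∀ x, |u x| ≤ R) (hvS : ∀ x, |v x| ≤ S)
    (hwu : 0 < ∑' x, w x * Real.exp (u x)) :
    HasDerivAt (fun t => kazdanWarner b μ w fun x => u x + t * v x)
      (energyBil b u v + ∑' x, μ x * v x - (∑' x, μ x) *
        ((∑' x, w x * (Real.exp (u x) * v x)) / ∑' x, w x * Real.exp (u x))) 0 := by
  have henergy : HasDerivAt (fun t => energy b fun x => u x + t * v x)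
      (2 * energyBil b u v) 0 := by
    simp only [hb.energy_add_mul hu hv]
    have hlinear := ((hasDerivAt_id (0 : ℝ)).const_mul 2).mul_const (energyBil b u v)
    have hquadratic := ((hasDerivAt_id (0 : ℝ)).fun_pow 2).mul_const (energy b v)
    simpa using (hlinear.const_add (energy b u)).fun_add hquadratic
  have hmean : HasDerivAt (fun t => ∑' x, μ x * (u x + t * v x)) (∑' x, μ x * v x) 0 := by
    have hlinear (t : ℝ) : ∑' x, μ x * (u x + t * v x) =
        ∑' x, μ x * u x + t * ∑' x, μ x * v x := by
      rw [← tsum_mul_left, ← (summable_mul_of_abs_le hμ huR).tsum_add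
        ((summable_mul_of_abs_le hμ hvS).mul_left t)]
      exact tsum_congr fun x => by ring
    simp only [hlinear]
    simpa using ((hasDerivAt_id (0 : ℝ)).mul_const (∑' x, μ x * v x)).const_add (∑' x, μ x * u x)
  have hlog := (hasDerivAt_tsum_mul_exp hw huR hvS).log (by simpa using hwu.ne')
  simpa [kazdanWarner] using
    ((henergy.div_const 2).fun_add hmean).fun_sub (hlog.const_mul (∑' x, μ x))

theorem energyBil_eq_of_isMinOn_kazdanWarner (hb : IsGraph b) (hm : FinMeasure m)
    (hcc : CanCompact b m) (hμ : Summable μ) (hw : Summable w) (hu : u ∈ admissible b m w)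
    (hmin : IsMinOn (kazdanWarner b μ w) (admissible b m w) u) (hv : MemDQ b m v) :
    energyBil b u v = (∑' x, μ x) / (∑' x, w x * Real.exp (u x)) *
      ∑' x, w x * (Real.exp (u x) * v x) - ∑' x, μ x * v x := by
  obtain ⟨R, hR⟩ := hcc u hu.1
  obtain ⟨S, hS⟩ := hcc v hv
  have hadm : ∀ᶠ t in 𝓝 (0 : ℝ), (fun x => u x + t * v x) ∈ admissible b m w := by
    have hcont := (hasDerivAt_tsum_mul_exp hw hR hS).continuousAt
    filter_upwards [hcont.eventually (lt_mem_nhds (by simpa using hu.2))] with t ht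
    exact ⟨hu.1.add_mul hb hm hv t, ht⟩
  have hloc : IsLocalMin (fun t => kazdanWarner b μ w fun x => u x + t * v x) 0 := by
    filter_upwards [hadm] with t ht
    simpa using isMinOn_iff.1 hmin _ ht
  have hcrit := hloc.hasDerivAt_eq_zero
    (hasDerivAt_kazdanWarner hb hμ hw hu.1.2 hv.2 hR hS hu.2)
  rw [div_mul_eq_mul_div, mul_div_assoc]
  linarith

theorem exists_energyBil_eq_tsum_mul_exp_sub (hb : IsGraph b) (hconn : GraphConnected b)
    (hm : FinMeasure m) (hcc : CanCompact b m) (hμ : Summable μ) (hM : 0 < ∑' x, μ x)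
    (hw : Summable w) (hpos : ∃ x, 0 < w x) :
    ∃ u, MemDQ b m u ∧ ∀ v, MemDQ b m v →
      energyBil b u v = ∑' x, (w x * Real.exp (u x) - μ x) * v x := by
  obtain ⟨u, hu, hmin⟩ := exists_isMinOn_kazdanWarner hb hconn hm hcc hμ hM hw hpos
  set s := Real.log ((∑' x, μ x) / ∑' x, w x * Real.exp (u x))
  have hs : Real.exp s = (∑' x, μ x) / ∑' x, w x * Real.exp (u x) :=
    Real.exp_log (div_pos hM hu.2)
  refine ⟨fun x => u x + s, hu.1.add_const hm s, fun v hv => ?_⟩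
  obtain ⟨R, hR⟩ := hcc u hu.1
  obtain ⟨S, hS⟩ := hcc v hv
  have hexp : Summable fun x => w x * (Real.exp (u x) * v x) :=
    (summable_mul_of_abs_le (summable_mul_of_abs_le hw (abs_exp_le_exp_of_abs_le hR)) hS).congr
      fun x => mul_assoc _ _ _
  rw [energyBil_add_const, energyBil_eq_of_isMinOn_kazdanWarner hb hm hcc hμ hw hu hmin hv, ← hs,
    ← tsum_mul_left, ← (hexp.mul_left _).tsum_sub (summable_mul_of_abs_le hμ hS)]
  exact tsum_congr fun x => by rw [Real.exp_add]; ring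

/-! ### The Kazdan–Warner equation -/

theorem IsLap.tsum_mul_eq_zero {f : X → ℝ} (hm : FinMeasure m) (hu : IsLap b m u f) :
    ∑' x, f x * m x = 0 := by
  simpa [energyBil] using (hu.2.2 (fun _ => 1) (hm.memDQ_const 1)).symm

theorem exists_pos_of_isLap (hm : FinMeasure m) (hg : MemL2 m g) (hgpos : 0 < ∑' x, g x * m x)
    (hu : IsLap b m u fun x => h x * Real.exp (u x) - g x) : ∃ x, 0 < h x := by
  by_contra! hneg
  have hle : ∑' x, (h x * Real.exp (u x) - g x) * m x ≤ ∑' x, -(g x * m x) := by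
    refine (hu.2.1.summable_mul hm).tsum_le_tsum (fun x => ?_) (hg.summable_mul hm).neg
    have hterm : h x * Real.exp (u x) * m x ≤ 0 := mul_nonpos_of_nonpos_of_nonneg
      (mul_nonpos_of_nonpos_of_nonneg (hneg x) (Real.exp_pos _).le) (hm.pos x).le
    linarith
  rw [hu.tsum_mul_eq_zero hm, tsum_neg] at hle
  linarith

theorem exists_isLap_of_exists_pos (hb : IsGraph b) (hconn : GraphConnected b) (hm : FinMeasure m)
    (hcc : CanCompact b m) (hg : MemL2 m g) (hgpos : 0 < ∑' x, g x * m x) (hh : MemL2 m h)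
    (hpos : ∃ x, 0 < h x) : ∃ u, IsLap b m u fun x => h x * Real.exp (u x) - g x := by
  obtain ⟨u, hu, heq⟩ := exists_energyBil_eq_tsum_mul_exp_sub hb hconn hm hcc
    (hg.summable_mul hm) hgpos (hh.summable_mul hm) (hpos.imp fun x hx => mul_pos hx (hm.pos x))
  obtain ⟨R, hR⟩ := hcc u hu
  refine ⟨u, hu, ?_, fun v hv => (heq v hv).trans (tsum_congr fun x => by ring)⟩
  simpa [sub_eq_add_neg] using (hh.mul_of_abs_le (abs_exp_le_exp_of_abs_le hR)).add
    (fun x => (hm.pos x).le) (hg.const_mul (-1))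

theorem stmt7_general {X : Type*} (b : X → X → ℝ) (m : X → ℝ) (hb : IsGraph b)
    (hconn : GraphConnected b) (hm : FinMeasure m) (hcc : CanCompact b m) (g : X → ℝ)
    (hg : MemL2 m g) (hgpos : 0 < ∑' x, g x * m x) (h : X → ℝ) (hh : MemL2 m h) :
    (∃ u : X → ℝ, IsLap b m u (fun x => h x * Real.exp (u x) - g x)) ↔ (∃ x, 0 < h x) :=
  ⟨fun ⟨_, hu⟩ => exists_pos_of_isLap hm hg hgpos hu,
    exists_isLap_of_exists_pos hb hconn hm hcc hg hgpos hh⟩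

end

/-- for `c > 0`, the equation `Lu = h e^u - c` has a solution iff `h`
is positive somewhere. -/
theorem stmt7 {X : Type*} [Countable X] (b : X → X → ℝ) (m : X → ℝ)
    (hb : IsGraph b) (hconn : GraphConnected b) (hm : FinMeasure m)
    (hcc : CanCompact b m) (c : ℝ) (hc : 0 < c)
    (h : X → ℝ) (hh2 : MemL2 m h) (hne : h ≠ 0) :
    (∃ u : X → ℝ, IsLap b m u (fun x => h x * Real.exp (u x) - c)) ↔
      (∃ x, 0 < h x) := by
  obtain ⟨o, -⟩ := Function.ne_iff.1 hne
  have hcm (x : X) : 0 < c * m x := mul_pos hc (hm.pos x)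
  exact stmt7_general b m hb hconn hm hcc (fun _ => c) (hm.memDQ_const (b := b) c).1
    ((hm.summable.mul_left c).tsum_pos (fun x => (hcm x).le) o (hcm o)) h hh2
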